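/- Let m ≤ n be positive integers and let Ψ = Ψ_{m,n} : ℝ² → ℂ² be the Lee–Wang map. Then Ψ is a conformal immersion with orthogonal coordinate tangent vectors: for all (s,t), ⟨∂_sΨ, ∂_tΨ⟩ = 0 and ‖∂_sΨ‖² = ‖∂_tΨ‖² = ((m+n)/(mn))·(m·sin²s + n·cos²s) > 0. -/

import Mathlib

/-- Real inner product on ℂ ≅ ℝ²: ⟨u,v⟩ = Re(u · conj v). -/
noncomputable def rinner (u v : ℂ) : ℝ := u.re * v.re + u.im * v.im

/-- Real inner product on ℂ² ≅ ℝ⁴. -/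
noncomputable def rinner2 (u v : ℂ × ℂ) : ℝ := rinner u.1 v.1 + rinner u.2 v.2

/-- Squared Euclidean norm on ℂ² ≅ ℝ⁴. -/
noncomputable def norm2 (v : ℂ × ℂ) : ℝ := ‖v.1‖ ^ 2 + ‖v.2‖ ^ 2

/-- Partial derivative of F : ℝ² → ℂ² in the first variable. -/
noncomputable def pd1 (F : ℝ → ℝ → ℂ × ℂ) (a b : ℝ) : ℂ × ℂ := deriv (fun x => F x b) a

/-- Partial derivative of F : ℝ² → ℂ² in the second variable. -/
noncomputable def pd2 (F : ℝ → ℝ → ℂ × ℂ) (a b : ℝ) : ℂ × ℂ := deriv (fun y => F a y) b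

/-- The Lee–Wang map Ψ_{m,n}(s,t) = √(m+n)((1/√n)cos s e^{i√(n/m)t}, (1/√m)sin s e^{i√(m/n)t}). -/
noncomputable def leeWang (m n : ℕ) (s t : ℝ) : ℂ × ℂ :=
  ((Real.sqrt (m + n) * (1 / Real.sqrt n) * Real.cos s : ℝ)
      * Complex.exp (Complex.I * (Real.sqrt ((n : ℝ) / m) * t)),
   (Real.sqrt (m + n) * (1 / Real.sqrt m) * Real.sin s : ℝ)
      * Complex.exp (Complex.I * (Real.sqrt ((m : ℝ) / n) * t)))

/-! The map has the form `(f(s) e^{iαt}, g(s) e^{iβt})` with `f`, `g` real, that is, a plane curve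
`(f, g)` swept by a one-parameter group of the torus. Then `∂ₛ` is a real multiple of `e^{iαt}`, and
`∂ₜ` a real multiple of `i e^{iαt}`, in the first factor (and likewise in the second), which gives
orthogonality. The frequencies are tuned to the profile: `f' = -β g` and `g' = α f`, so the two
tangent vectors have the same length, with the contributions of the two factors exchanged. -/

theorem rinner_ofReal_mul_ofReal_mul_I_mul (a b : ℝ) (z : ℂ) :
    rinner (a * z) (b * (Complex.I * z)) = 0 := by
  simp only [rinner, Complex.re_ofReal_mul, Complex.im_ofReal_mul, Complex.I_mul_re,
    Complex.I_mul_im]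
  ring

theorem norm2_ofReal_mul {z w : ℂ} (hz : ‖z‖ = 1) (hw : ‖w‖ = 1) (a b : ℝ) :
    norm2 (a * z, b * w) = a ^ 2 + b ^ 2 := by
  simp [norm2, hz, hw]

theorem norm_exp_I_mul_ofReal_mul_ofReal (α t : ℝ) : ‖Complex.exp (Complex.I * (α * t))‖ = 1 := by
  rw [← Complex.ofReal_mul, Complex.norm_exp_I_mul_ofReal]

theorem hasDerivAt_exp_I_mul_ofReal_mul (α t : ℝ) :
    HasDerivAt (fun y : ℝ => Complex.exp (Complex.I * (α * y)))
      (α * (Complex.I * Complex.exp (Complex.I * (α * t)))) t := by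
  have h := (((hasDerivAt_id t).ofReal_comp.const_mul (α : ℂ)).const_mul Complex.I).cexp
  refine h.congr_deriv ?_
  simp only [id_eq, Complex.ofReal_one]
  ring

/-- The surface in `ℂ²` swept by the plane curve `(f, g)`, placed in `ℝ² ⊆ ℂ²`, under the
one-parameter group `t ↦ (e^{iαt}, e^{iβt})` of the torus. -/
noncomputable def torusSweep (f g : ℝ → ℝ) (α β s t : ℝ) : ℂ × ℂ :=
  (f s * Complex.exp (Complex.I * (α * t)), g s * Complex.exp (Complex.I * (β * t)))

namespace torusSweep

variable {f g : ℝ → ℝ} {f' g' s : ℝ}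

theorem pd1_eq (hf : HasDerivAt f f' s) (hg : HasDerivAt g g' s) (α β t : ℝ) :
    pd1 (torusSweep f g α β) s t =
      (f' * Complex.exp (Complex.I * (α * t)), g' * Complex.exp (Complex.I * (β * t))) :=
  ((hf.ofReal_comp.mul_const _).prodMk (hg.ofReal_comp.mul_const _)).deriv

theorem pd2_eq (f g : ℝ → ℝ) (α β s t : ℝ) :
    pd2 (torusSweep f g α β) s t =
      ((α * f s : ℝ) * (Complex.I * Complex.exp (Complex.I * (α * t))),
        (β * g s : ℝ) * (Complex.I * Complex.exp (Complex.I * (β * t)))) := by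
  have h := ((hasDerivAt_exp_I_mul_ofReal_mul α t).const_mul (f s : ℂ)).prodMk
    ((hasDerivAt_exp_I_mul_ofReal_mul β t).const_mul (g s : ℂ))
  refine h.deriv.trans ?_
  push_cast
  ring_nf

theorem rinner2_pd1_pd2 (hf : HasDerivAt f f' s) (hg : HasDerivAt g g' s) (α β t : ℝ) :
    rinner2 (pd1 (torusSweep f g α β) s t) (pd2 (torusSweep f g α β) s t) = 0 := by
  simp only [pd1_eq hf hg, pd2_eq, rinner2, rinner_ofReal_mul_ofReal_mul_I_mul, add_zero]

theorem norm2_pd1 (hf : HasDerivAt f f' s) (hg : HasDerivAt g g' s) (α β t : ℝ) :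
    norm2 (pd1 (torusSweep f g α β) s t) = f' ^ 2 + g' ^ 2 := by
  rw [pd1_eq hf hg]
  exact norm2_ofReal_mul (norm_exp_I_mul_ofReal_mul_ofReal α t)
    (norm_exp_I_mul_ofReal_mul_ofReal β t) f' g'

theorem norm2_pd2 (f g : ℝ → ℝ) (α β s t : ℝ) :
    norm2 (pd2 (torusSweep f g α β) s t) = (α * f s) ^ 2 + (β * g s) ^ 2 := by
  rw [pd2_eq]
  apply norm2_ofReal_mul <;>
    rw [norm_mul, Complex.norm_I, norm_exp_I_mul_ofReal_mul_ofReal, one_mul]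

theorem norm2_pd2_eq_norm2_pd1 {α β : ℝ} (hf : HasDerivAt f (-(β * g s)) s)
    (hg : HasDerivAt g (α * f s) s) (t : ℝ) :
    norm2 (pd2 (torusSweep f g α β) s t) = norm2 (pd1 (torusSweep f g α β) s t) := by
  rw [norm2_pd2, norm2_pd1 hf hg, neg_sq, add_comm]

end torusSweep

theorem sqrt_div_mul_mul_one_div_sqrt {y : ℝ} (hy : 0 < y) (x c : ℝ) :
    √(y / x) * (c * (1 / √y)) = c * (1 / √x) := by
  have : √y ≠ 0 := (Real.sqrt_pos.2 hy).ne'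
  rw [Real.sqrt_div hy.le]
  field_simp

theorem mul_sin_sq_add_mul_cos_sq_pos {p q : ℝ} (hp : 0 < p) (hq : 0 < q) (s : ℝ) :
    0 < p * Real.sin s ^ 2 + q * Real.cos s ^ 2 :=
  calc
    0 < min p q := lt_min hp hq
    _ = min p q * Real.sin s ^ 2 + min p q * Real.cos s ^ 2 := by
      rw [← mul_add, Real.sin_sq_add_cos_sq, mul_one]
    _ ≤ p * Real.sin s ^ 2 + q * Real.cos s ^ 2 := by
      gcongr
      exacts [min_le_left p q, min_le_right p q]

/-- The Lee–Wang map with real parameters `p`, `q` in place of the integers `m`, `n`. -/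
noncomputable def realLeeWang (p q : ℝ) : ℝ → ℝ → ℂ × ℂ :=
  torusSweep (fun s => √(p + q) * (1 / √q) * Real.cos s)
    (fun s => √(p + q) * (1 / √p) * Real.sin s) √(q / p) √(p / q)

theorem leeWang_eq_realLeeWang (m n : ℕ) : leeWang m n = realLeeWang m n := rfl

namespace realLeeWang

theorem hasDerivAt_cos_profile {p : ℝ} (hp : 0 < p) (q s : ℝ) :
    HasDerivAt (fun s => √(p + q) * (1 / √q) * Real.cos s)
      (-(√(p / q) * (√(p + q) * (1 / √p) * Real.sin s))) s := by
  rw [← mul_assoc, sqrt_div_mul_mul_one_div_sqrt hp, ← mul_neg]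
  exact (Real.hasDerivAt_cos s).const_mul _

theorem hasDerivAt_sin_profile {q : ℝ} (hq : 0 < q) (p s : ℝ) :
    HasDerivAt (fun s => √(p + q) * (1 / √p) * Real.sin s)
      (√(q / p) * (√(p + q) * (1 / √q) * Real.cos s)) s := by
  rw [← mul_assoc, sqrt_div_mul_mul_one_div_sqrt hq]
  exact (Real.hasDerivAt_sin s).const_mul _

theorem norm2_pd1_eq {p q : ℝ} (hp : 0 < p) (hq : 0 < q) (s t : ℝ) :
    norm2 (pd1 (realLeeWang p q) s t) =
      (p + q) / (p * q) * (p * Real.sin s ^ 2 + q * Real.cos s ^ 2) := by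
  rw [realLeeWang, torusSweep.norm2_pd1 ((Real.hasDerivAt_cos s).const_mul _)
    ((Real.hasDerivAt_sin s).const_mul _)]
  simp only [mul_pow, neg_sq, div_pow, one_pow, Real.sq_sqrt hp.le, Real.sq_sqrt hq.le,
    Real.sq_sqrt (add_pos hp hq).le]
  field_simp

theorem norm2_pd2_eq_norm2_pd1 {p q : ℝ} (hp : 0 < p) (hq : 0 < q) (s t : ℝ) :
    norm2 (pd2 (realLeeWang p q) s t) = norm2 (pd1 (realLeeWang p q) s t) :=
  torusSweep.norm2_pd2_eq_norm2_pd1 (hasDerivAt_cos_profile hp q s)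
    (hasDerivAt_sin_profile hq p s) t

theorem rinner2_pd1_pd2 (p q s t : ℝ) :
    rinner2 (pd1 (realLeeWang p q) s t) (pd2 (realLeeWang p q) s t) = 0 :=
  torusSweep.rinner2_pd1_pd2 ((Real.hasDerivAt_cos s).const_mul _)
    ((Real.hasDerivAt_sin s).const_mul _) _ _ t

end realLeeWang

theorem lee_wang_conformal_general {p q : ℝ} (hp : 0 < p) (hq : 0 < q) (s t : ℝ) :
    rinner2 (pd1 (realLeeWang p q) s t) (pd2 (realLeeWang p q) s t) = 0 ∧
    norm2 (pd1 (realLeeWang p q) s t)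
      = ((p + q) / (p * q)) * (p * Real.sin s ^ 2 + q * Real.cos s ^ 2) ∧
    norm2 (pd2 (realLeeWang p q) s t)
      = ((p + q) / (p * q)) * (p * Real.sin s ^ 2 + q * Real.cos s ^ 2) ∧
    0 < ((p + q) / (p * q)) * (p * Real.sin s ^ 2 + q * Real.cos s ^ 2) :=
  have h := realLeeWang.norm2_pd1_eq hp hq s t
  ⟨realLeeWang.rinner2_pd1_pd2 p q s t, h,
    (realLeeWang.norm2_pd2_eq_norm2_pd1 hp hq s t).trans h,
    mul_pos (by positivity) (mul_sin_sq_add_mul_cos_sq_pos hp hq s)⟩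

/-- The Lee–Wang map is a conformal immersion with orthogonal coordinate tangent
vectors: ⟨∂ₛΨ, ∂ₜΨ⟩ = 0 and ‖∂ₛΨ‖² = ‖∂ₜΨ‖² = ((m+n)/(mn))(m sin²s + n cos²s) > 0. -/
theorem lee_wang_conformal (m n : ℕ) (hm : 0 < m) (hmn : m ≤ n) :
    ∀ s t : ℝ,
      rinner2 (pd1 (leeWang m n) s t) (pd2 (leeWang m n) s t) = 0 ∧
      norm2 (pd1 (leeWang m n) s t)
        = ((m + n : ℝ) / (m * n)) * (m * Real.sin s ^ 2 + n * Real.cos s ^ 2) ∧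
      norm2 (pd2 (leeWang m n) s t)
        = ((m + n : ℝ) / (m * n)) * (m * Real.sin s ^ 2 + n * Real.cos s ^ 2) ∧
      0 < ((m + n : ℝ) / (m * n)) * (m * Real.sin s ^ 2 + n * Real.cos s ^ 2) := by
  simpa only [leeWang_eq_realLeeWang] using
    lee_wang_conformal_general (Nat.cast_pos.2 hm) (Nat.cast_pos.2 (hm.trans_le hmn))
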